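/- Let k ≥ 3 be an integer and let x = (x_1, …, x_k) lie in the standard simplex Δ_k. (i) If x_i ≤ 6/11 for every i ≥ 3, then d_k(x) ≤ C_k(x_1, x_2). (ii) If x_i ≥ 6/11 for some i ≥ 3, then d_k(x) ≤ d_3(x_1, x_2, 1 − x_1 − x_2). -/

import Mathlib

/-- The cumulative distribution function `F(z) = min((11/6)z, 1)` of the ICUT scheme. -/
noncomputable def Fcdf (z : ℝ) : ℝ := min ((11 / 6) * z) 1

/-- The probability density `F′(z)`: `11/6` for `z < 6/11` and `0` for `z ≥ 6/11`. -/
noncomputable def Fpdf (z : ℝ) : ℝ := if z < 6 / 11 then 11 / 6 else 0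

/-- The density `d_k(x)` with which ICUT cuts an infinitesimal `1,2`-aligned segment at
`x = (x_1, …, x_k)`:
`d_k(x) = (1/k!) ∑_σ [ F′(x_1) ∏_{i : σ(i) < σ(1)} (1 − F(x_i))
                      + F′(x_2) ∏_{i : σ(i) < σ(2)} (1 − F(x_i)) ]`. -/
noncomputable def dDensity (k : ℕ) (hk : 2 ≤ k) (x : Fin k → ℝ) : ℝ :=
  ((Nat.factorial k : ℝ))⁻¹ *
    ∑ σ : Equiv.Perm (Fin k),
      (Fpdf (x ⟨0, by omega⟩) *
          ∏ i ∈ Finset.univ.filter (fun i => σ i < σ ⟨0, by omega⟩), (1 - Fcdf (x i)) +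
        Fpdf (x ⟨1, by omega⟩) *
          ∏ i ∈ Finset.univ.filter (fun i => σ i < σ ⟨1, by omega⟩), (1 - Fcdf (x i)))

/-- `C_k(x_1, x_2) = d_k(x_1, x_2, c, …, c)` where `c = (1 − x_1 − x_2)/(k − 2)`. -/
noncomputable def Cdensity (k : ℕ) (hk : 3 ≤ k) (x1 x2 : ℝ) : ℝ :=
  dDensity k (by omega)
    (fun i => if (i : ℕ) = 0 then x1 else if (i : ℕ) = 1 then x2
      else (1 - x1 - x2) / ((k : ℝ) - 2))

open Finset

lemma exists_perm_aux {k : ℕ} (j : Fin k) (S T : Finset (Fin k)) (hS : j ∉ S) (hT : j ∉ T)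
    (h : #S = #T) : ∃ τ : Equiv.Perm (Fin k), τ j = j ∧ ∀ i, τ i ∈ T ↔ i ∈ S := by
  classical
  let e : {x // x ∈ S} ≃ {x // x ∈ T} := Finset.equivOfCardEq h
  let τ := e.extendSubtype
  have h1 : ∀ i, τ i ∈ T ↔ i ∈ S := by
    intro i
    constructor
    · intro hi
      by_contra hc
      exact e.extendSubtype_not_mem i hc hi
    · intro hi
      exact e.extendSubtype_mem i hi
  refine ⟨Equiv.swap (τ j) j * τ, by simp, ?_⟩
  intro i
  have hj : τ j ∉ T := fun hh => hS ((h1 j).1 hh)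
  rw [← h1 i, Equiv.Perm.mul_apply]
  by_cases h2 : τ i = τ j
  · rw [h2]; simp [hT, hj]
  by_cases h3 : τ i = j
  · rw [h3]; simp [hT, hj]
  rw [Equiv.swap_apply_of_ne_of_ne h2 h3]

def pre {k : ℕ} (j : Fin k) (σ : Equiv.Perm (Fin k)) : Finset (Fin k) :=
  univ.filter (fun i => σ i < σ j)

lemma pre_card {k : ℕ} (j : Fin k) (σ : Equiv.Perm (Fin k)) : #(pre j σ) = (σ j : ℕ) := by
  have : (pre j σ).map σ.toEmbedding = Finset.Iio (σ j) := by
    ext i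
    simp only [pre, mem_map_equiv, mem_filter, mem_univ, true_and, mem_Iio,
      Equiv.apply_symm_apply]
  rw [← Finset.card_map σ.toEmbedding, this, Fin.card_Iio]

lemma count_pos {k : ℕ} (j m : Fin k) :
    #(univ.filter (fun σ : Equiv.Perm (Fin k) => σ j = m)) = (k-1).factorial := by
  have h1 : ∀ m' : Fin k, #(univ.filter (fun σ : Equiv.Perm (Fin k) => σ j = m')) =
      #(univ.filter (fun σ : Equiv.Perm (Fin k) => σ j = m)) := by
    intro m'
    refine Finset.card_equiv (Equiv.mulLeft (Equiv.swap m m')) ?_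
    intro σ
    simp [Equiv.swap_apply_eq_iff]
  have h2 := Finset.card_eq_sum_card_fiberwise (s := (univ : Finset (Equiv.Perm (Fin k))))
    (t := univ) (f := fun σ => σ j) (by simp)
  simp only [h1] at h2
  rw [Finset.card_univ, Fintype.card_perm] at h2
  simp at h2
  have hk : 0 < k := j.pos
  obtain ⟨n, rfl⟩ : ∃ n, k = n + 1 := ⟨k-1, by omega⟩
  rw [Nat.factorial_succ] at h2
  exact (Nat.eq_of_mul_eq_mul_left hk h2).symm

lemma count_pre {k : ℕ} (j : Fin k) (S : Finset (Fin k)) (hS : j ∉ S) :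
    (k-1).choose #S * #(univ.filter (fun σ : Equiv.Perm (Fin k) => pre j σ = S)) =
      (k-1).factorial := by
  have hlt : #S < k := by
    have := Finset.card_lt_card (s := S) (t := univ)
      (Finset.ssubset_univ_iff.2 (fun h => hS (by simp [h])))
    simpa using this
  have h1 : ∀ T ∈ powersetCard #S (univ.erase j),
      #(univ.filter (fun σ : Equiv.Perm (Fin k) => pre j σ = T)) =
      #(univ.filter (fun σ : Equiv.Perm (Fin k) => pre j σ = S)) := by
    intro T hT
    rw [mem_powersetCard] at hT
    have hjT : j ∉ T := fun h => by simpa using hT.1 h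
    obtain ⟨τ, hτj, hτ⟩ := exists_perm_aux j S T hS hjT hT.2.symm
    refine Finset.card_equiv (Equiv.mulRight τ) ?_
    intro σ
    simp only [mem_filter, mem_univ, true_and, Equiv.coe_mulRight, pre, Finset.ext_iff,
      Equiv.Perm.mul_apply, hτj, ← hτ]
    exact ⟨fun h i => h _, fun h i => by simpa using h (τ.symm i)⟩
  have h2 := Finset.card_eq_sum_card_fiberwise
    (s := (univ.filter (fun σ : Equiv.Perm (Fin k) => σ j = ⟨#S, hlt⟩)))
    (t := powersetCard #S (univ.erase j)) (f := fun σ => pre j σ) (by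
      intro σ hσ
      simp only [coe_filter, mem_univ, true_and, Set.mem_ofPred_eq] at hσ
      simp only [mem_coe, mem_powersetCard, pre_card, hσ, and_true]
      intro i hi
      simp only [pre, mem_filter, mem_univ, true_and] at hi
      simp only [mem_erase, mem_univ, and_true]
      rintro rfl
      exact lt_irrefl _ hi)
  have h3 : ∀ T ∈ powersetCard #S (univ.erase j),
      #((univ.filter (fun σ : Equiv.Perm (Fin k) => σ j = ⟨#S, hlt⟩)).filter
        (fun σ => pre j σ = T)) =
      #(univ.filter (fun σ : Equiv.Perm (Fin k) => pre j σ = S)) := by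
    intro T hT
    rw [← h1 T hT]
    congr 1
    ext σ
    simp only [mem_filter, mem_univ, true_and, and_iff_right_iff_imp]
    rintro rfl
    ext
    rw [← pre_card]
    exact (mem_powersetCard.1 hT).2
  rw [Finset.sum_congr rfl h3, count_pos] at h2
  simpa using h2.symm

lemma beta_nat (b a : ℕ) : ∫ t in (0:ℝ)..1, t ^ a * (1 - t) ^ b =
    (a.factorial * b.factorial : ℝ) / (a + b + 1).factorial := by
  induction b generalizing a with
  | zero =>
    simp [Nat.factorial_succ]
    field_simp
  | succ b ih =>
    have := intervalIntegral.integral_mul_deriv_eq_deriv_mul (a := (0:ℝ)) (b := 1)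
      (u := fun t => (1 - t) ^ (b+1)) (u' := fun t => (b+1) * (1-t)^b * (-1))
      (v := fun t => t ^ (a+1) / (a+1)) (v' := fun t => t ^ a)
      (by
        intro t _
        have := ((hasDerivAt_id' t).const_sub 1).fun_pow (b+1)
        simpa using this)
      (by
        intro t _
        have := ((hasDerivAt_id' t).fun_pow (a+1)).div_const ((a:ℝ)+1)
        convert this using 1
        push_cast
        simp
        field_simp)
      (by apply Continuous.intervalIntegrable; fun_prop)
      (by apply Continuous.intervalIntegrable; fun_prop)
    simp only [mul_comm (_ ^ a)]
    rw [this]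
    have e : ∀ t : ℝ, (b+1) * (1-t)^b * (-1) * (t ^ (a+1) / (a+1)) =
      (-(b+1)/(a+1)) * (t^(a+1) * (1-t)^b) := by intro t; field_simp
    simp only [e, intervalIntegral.integral_const_mul, ih]
    have : a + 1 + b + 1 = a + (b+1) + 1 := by ring
    rw [this]
    simp [Nat.factorial_succ a, Nat.factorial_succ b]
    field_simp
    ring

lemma avg_eq {k : ℕ} (j : Fin k) (y : Fin k → ℝ) :
    ((Nat.factorial k : ℝ))⁻¹ * ∑ σ : Equiv.Perm (Fin k),
      ∏ i ∈ univ.filter (fun i => σ i < σ j), (1 - y i) =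
    ∫ t in (0:ℝ)..1, ∏ i ∈ univ.erase j, (1 - t * y i) := by
  have hk : 0 < k := j.pos
  have e1 : ∀ t : ℝ, ∏ i ∈ univ.erase j, (1 - t * y i) =
      ∑ S ∈ (univ.erase j).powerset, (∏ i ∈ S, (1 - y i)) * (t ^ #S * (1 - t) ^ (k - 1 - #S)) := by
    intro t
    have : ∀ i, 1 - t * y i = t * (1 - y i) + (1 - t) := by intro i; ring
    simp only [this]
    rw [Finset.prod_add]
    refine Finset.sum_congr rfl fun S hS => ?_
    rw [mem_powerset] at hS
    rw [prod_const, prod_mul_distrib, prod_const, card_sdiff_of_subset hS, card_erase_of_mem (mem_univ _)]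
    simp
    ring
  simp only [e1]
  rw [intervalIntegral.integral_finsetSum
    (fun S _ => by apply Continuous.intervalIntegrable; fun_prop)]
  simp only [intervalIntegral.integral_const_mul, beta_nat]
  rw [← Finset.sum_fiberwise_of_maps_to (s := univ) (t := (univ.erase j).powerset)
    (g := fun σ => pre j σ)]
  · rw [mul_sum]
    refine sum_congr rfl fun S hS => ?_
    rw [mem_powerset] at hS
    have hjS : j ∉ S := fun h => by simpa using hS h
    have hc := card_le_card hS
    rw [card_erase_of_mem (mem_univ _), card_univ, Fintype.card_fin] at hc
    have : ∀ σ ∈ univ.filter (fun σ => pre j σ = S), 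
        ∏ i ∈ univ.filter (fun i => σ i < σ j), (1 - y i) = ∏ i ∈ S, (1 - y i) := by
      intro σ hσ
      rw [mem_filter] at hσ
      rw [← hσ.2]; rfl
    rw [sum_congr rfl this, sum_const, nsmul_eq_mul]
    have hN := count_pre j S hjS
    have hch := Nat.choose_mul_factorial_mul_factorial hc
    have hN2 : #(univ.filter (fun σ : Equiv.Perm (Fin k) => pre j σ = S)) =
        (#S).factorial * (k-1-#S).factorial := by
      apply Nat.eq_of_mul_eq_mul_left (Nat.choose_pos hc)
      rw [hN, ← hch, mul_assoc]
    rw [hN2, show #S + (k - 1 - #S) + 1 = k by omega]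
    push_cast
    field_simp
  · intro σ _
    rw [mem_powerset]
    intro i hi
    simp only [pre, mem_filter, mem_univ, true_and] at hi
    simp only [mem_erase, mem_univ, and_true]
    rintro rfl
    exact lt_irrefl _ hi

lemma amgm {ι : Type*} (s : Finset ι) (hs : 0 < #s) (z : ι → ℝ) (hz : ∀ i ∈ s, 0 ≤ z i) :
    ∏ i ∈ s, z i ≤ ((∑ i ∈ s, z i) / #s) ^ #s := by
  have h := Real.geom_mean_le_arith_mean s (fun _ => 1) z (by simp) (by simpa using hs) hz
  simp only [Real.rpow_one, sum_const, nsmul_eq_mul, mul_one, one_mul] at h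
  have h0 : 0 ≤ ∏ i ∈ s, z i := prod_nonneg hz
  have h2 := pow_le_pow_left₀ (Real.rpow_nonneg h0 _) h #s
  rwa [Real.rpow_inv_natCast_pow h0 hs.ne'] at h2

def Rset (k : ℕ) : Finset (Fin k) := univ.filter (fun i => 2 ≤ (i : ℕ))

lemma dform (k : ℕ) (hk : 2 ≤ k) (x : Fin k → ℝ) :
    dDensity k hk x =
      Fpdf (x ⟨0, by omega⟩) * (∫ t in (0:ℝ)..1,
        (1 - t * Fcdf (x ⟨1, by omega⟩)) * ∏ i ∈ Rset k, (1 - t * Fcdf (x i))) +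
      Fpdf (x ⟨1, by omega⟩) * ∫ t in (0:ℝ)..1,
        (1 - t * Fcdf (x ⟨0, by omega⟩)) * ∏ i ∈ Rset k, (1 - t * Fcdf (x i)) := by
  have e0 : (univ.erase (⟨0, by omega⟩ : Fin k)) = insert ⟨1, by omega⟩ (Rset k) := by
    ext i
    simp [Rset, Fin.ext_iff]
    omega
  have e1 : (univ.erase (⟨1, by omega⟩ : Fin k)) = insert ⟨0, by omega⟩ (Rset k) := by
    ext i
    simp [Rset, Fin.ext_iff]
    omega
  have h0 := avg_eq (⟨0, by omega⟩ : Fin k) (fun i => Fcdf (x i))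
  have h1 := avg_eq (⟨1, by omega⟩ : Fin k) (fun i => Fcdf (x i))
  rw [e0] at h0
  rw [e1] at h1
  have n1 : (⟨1, by omega⟩ : Fin k) ∉ Rset k := by simp [Rset]
  have n0 : (⟨0, by omega⟩ : Fin k) ∉ Rset k := by simp [Rset]
  simp only [prod_insert n1] at h0
  simp only [prod_insert n0] at h1
  rw [← h0, ← h1, dDensity, sum_add_distrib, ← mul_sum, ← mul_sum]
  ring

lemma Fpdf_nonneg (z : ℝ) : 0 ≤ Fpdf z := by
  unfold Fpdf; split_ifs <;> norm_num

lemma Fcdf_le (z : ℝ) : Fcdf z ≤ 1 := min_le_right _ _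

lemma Fcdf_nonneg {z : ℝ} (hz : 0 ≤ z) : 0 ≤ Fcdf z := le_min (by positivity) (by norm_num)

lemma fac_nonneg {t : ℝ} (h0 : 0 ≤ t) (h1 : t ≤ 1) (z : ℝ) : 0 ≤ 1 - t * Fcdf z := by
  nlinarith [Fcdf_le z]

lemma dmono (k l : ℕ) (hk : 2 ≤ k) (hl : 2 ≤ l) (x : Fin k → ℝ) (y : Fin l → ℝ)
    (h0 : x ⟨0, by omega⟩ = y ⟨0, by omega⟩) (h1 : x ⟨1, by omega⟩ = y ⟨1, by omega⟩)
    (h : ∀ t : ℝ, 0 ≤ t → t ≤ 1 →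
      ∏ i ∈ Rset k, (1 - t * Fcdf (x i)) ≤ ∏ i ∈ Rset l, (1 - t * Fcdf (y i))) :
    dDensity k hk x ≤ dDensity l hl y := by
  have key : ∀ z : ℝ, ∫ t in (0:ℝ)..1,
        (1 - t * Fcdf z) * ∏ i ∈ Rset k, (1 - t * Fcdf (x i)) ≤ ∫ t in (0:ℝ)..1,
        (1 - t * Fcdf z) * ∏ i ∈ Rset l, (1 - t * Fcdf (y i)) := by
    intro z
    apply intervalIntegral.integral_mono_on (by norm_num)
    · apply Continuous.intervalIntegrable; fun_prop
    · apply Continuous.intervalIntegrable; fun_prop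
    · intro t ht
      exact mul_le_mul_of_nonneg_left (h t ht.1 ht.2) (fac_nonneg ht.1 ht.2 z)
  rw [dform, dform, ← h0, ← h1]
  exact add_le_add (mul_le_mul_of_nonneg_left (key _) (Fpdf_nonneg _))
    (mul_le_mul_of_nonneg_left (key _) (Fpdf_nonneg _))

lemma sum_split (k : ℕ) (hk : 2 ≤ k) (f : Fin k → ℝ) :
    ∑ i, f i = f ⟨0, by omega⟩ + f ⟨1, by omega⟩ + ∑ i ∈ Rset k, f i := by
  have e0 : (univ : Finset (Fin k)) = insert ⟨0, by omega⟩ (insert ⟨1, by omega⟩ (Rset k)) := by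
    ext i
    simp [Rset, Fin.ext_iff]
    omega
  rw [e0, sum_insert (by simp [Rset]), sum_insert (by simp [Rset]), add_assoc]

lemma Rset_card (k : ℕ) (hk : 2 ≤ k) : (#(Rset k) : ℝ) = (k : ℝ) - 2 := by
  have := sum_split k hk (fun _ => 1)
  simp at this
  linarith

/-- (i) if `x_i ≤ 6/11` for every coordinate `i ≥ 3` then
`d_k(x) ≤ C_k(x_1, x_2)`; (ii) if `x_i ≥ 6/11` for some `i ≥ 3` then
`d_k(x) ≤ d_3(x_1, x_2, 1 − x_1 − x_2)`. -/
theorem dDensity_le_Cdensity_or_three (k : ℕ) (hk : 3 ≤ k) (x : Fin k → ℝ)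
    (hx : x ∈ stdSimplex ℝ (Fin k)) :
    ((∀ i : Fin k, 2 ≤ (i : ℕ) → x i ≤ 6 / 11) →
        dDensity k (by omega) x ≤ Cdensity k hk (x ⟨0, by omega⟩) (x ⟨1, by omega⟩)) ∧
    ((∃ i : Fin k, 2 ≤ (i : ℕ) ∧ 6 / 11 ≤ x i) →
        dDensity k (by omega) x ≤
          dDensity 3 (by omega)
            ![x ⟨0, by omega⟩, x ⟨1, by omega⟩, 1 - x ⟨0, by omega⟩ - x ⟨1, by omega⟩]) := by
  obtain ⟨hpos, hsum⟩ := hx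
  have hs := sum_split k (by omega) x
  rw [hsum] at hs
  constructor
  · intro h
    unfold Cdensity
    apply dmono
    · simp
    · simp
    intro t ht0 ht1
    have hc := Rset_card k (by omega)
    have hk' : (3:ℝ) ≤ k := by exact_mod_cast hk
    have hcpos : 0 < #(Rset k) := by
      have : (0:ℝ) < #(Rset k) := by linarith
      exact_mod_cast this
    refine (amgm _ hcpos _ (fun i _ => fac_nonneg ht0 ht1 _)).trans (le_of_eq ?_)
    rw [← prod_const]
    refine prod_congr rfl fun i hi => ?_
    have hi2 : 2 ≤ (i : ℕ) := by simpa [Rset] using hi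
    rw [if_neg (by omega), if_neg (by omega), ← hc]
    have hF : ∀ z : ℝ, z ≤ 6 / 11 → Fcdf z = 11 / 6 * z := by
      intro z hz; exact min_eq_left (by linarith)
    have hle : ∑ i ∈ Rset k, x i ≤ #(Rset k) * (6 / 11) := by
      rw [← nsmul_eq_mul]
      exact sum_le_card_nsmul _ _ _ (fun i hi => h i (by simpa [Rset] using hi))
    have hcp : (0:ℝ) < #(Rset k) := by exact_mod_cast hcpos
    have e1 : 1 - x ⟨0, by omega⟩ - x ⟨1, by omega⟩ = ∑ i ∈ Rset k, x i := by linarith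
    rw [e1, hF _ (by rw [div_le_iff₀ hcp]; linarith)]
    have e2 : ∑ i ∈ Rset k, (1 - t * Fcdf (x i)) = ∑ i ∈ Rset k, (1 - t * (11 / 6 * x i)) :=
      sum_congr rfl fun i hi => by rw [hF _ (h i (by simpa [Rset] using hi))]
    rw [e2, sum_sub_distrib, ← mul_sum, ← mul_sum]
    simp
    field_simp
  · rintro ⟨i, hi, hxi⟩
    apply dmono
    · rfl
    · rfl
    intro t ht0 ht1
    have hiR : i ∈ Rset k := by simp [Rset, hi]
    have hle : x i ≤ ∑ i ∈ Rset k, x i :=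
      single_le_sum (f := x) (fun j _ => hpos j) hiR
    have hF : ∀ z : ℝ, 6 / 11 ≤ z → Fcdf z = 1 := by
      intro z hz; exact min_eq_right (by linarith)
    have e3 : Rset 3 = {2} := by decide
    rw [e3, prod_singleton]
    have e4 : (![x ⟨0, by omega⟩, x ⟨1, by omega⟩, 1 - x ⟨0, by omega⟩ - x ⟨1, by omega⟩] :
      Fin 3 → ℝ) 2 = 1 - x ⟨0, by omega⟩ - x ⟨1, by omega⟩ := rfl
    rw [e4, hF _ (by linarith), ← mul_prod_erase _ _ hiR, hF _ hxi]
    have : ∏ j ∈ (Rset k).erase i, (1 - t * Fcdf (x j)) ≤ 1 :=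
      prod_le_one (fun j _ => fac_nonneg ht0 ht1 _)
        (fun j _ => by nlinarith [Fcdf_nonneg (hpos j)])
    nlinarith
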